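/- Let G be a 2-connected graph with no compliant edges that is not a cycle, let xy be an edge of G, let S be the vertex set of a connected component of G - {x,y}, and let H be the subgraph of G induced on S ∪ {x,y}. Then H is not outerplanar. -/

import Mathlib

open SimpleGraph

universe u

/-- A flat (suspended) path: a path of length at least 2 all of whose internal
vertices have degree 2 in `G`. -/
def IsFlatPath {V : Type u} (G : SimpleGraph V) {x y : V} (p : G.Walk x y) : Prop :=
  p.IsPath ∧ 2 ≤ p.length ∧
    ∀ v ∈ p.support, v ≠ x → v ≠ y → (G.neighborSet v).ncard = 2

/-- An edge `xy` is compliant if `x` and `y` are also joined by a flat path. -/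
def Compliant {V : Type u} (G : SimpleGraph V) (x y : V) : Prop :=
  G.Adj x y ∧ ∃ p : G.Walk x y, IsFlatPath G p

/-- A graph is 2-connected if it has at least 3 vertices and remains connected
after deleting any single vertex. -/
def TwoConnected {V : Type u} (G : SimpleGraph V) : Prop :=
  3 ≤ Nat.card V ∧ ∀ v : V, ((⊤ : G.Subgraph).deleteVerts {v}).coe.Connected

/-- A (finite) graph is a cycle iff it is connected and 2-regular. -/
def IsCycleGraph {V : Type u} (G : SimpleGraph V) : Prop :=
  G.Connected ∧ ∀ v : V, (G.neighborSet v).ncard = 2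

/-- Data exhibiting a subgraph of `G` which is a subdivision of `H`:
branch vertices are given by an injection `f`, and each edge of `H` is
replaced by a path in `G`, these paths being internally disjoint and their
internal vertices avoiding the branch vertices. -/
structure SubdivisionIn {V : Type u} {W : Type*} (G : SimpleGraph V) (H : SimpleGraph W) where
  f : W → V
  inj : Function.Injective f
  path : ∀ ⦃u v : W⦄, H.Adj u v → G.Walk (f u) (f v)
  isPath : ∀ ⦃u v : W⦄ (h : H.Adj u v), (path h).IsPath
  internal_not_branch : ∀ ⦃u v : W⦄ (h : H.Adj u v), ∀ w ∈ (path h).support,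
      (∃ z, w = f z) → w = f u ∨ w = f v
  internal_disjoint : ∀ ⦃u v u' v' : W⦄ (h : H.Adj u v) (h' : H.Adj u' v'),
      s(u, v) ≠ s(u', v') → ∀ w ∈ (path h).support, w ∈ (path h').support →
        w = f u ∨ w = f v

/-- The vertices of the subdivided subgraph. -/
def SubdivisionIn.verts {V : Type u} {W : Type*} {G : SimpleGraph V} {H : SimpleGraph W}
    (D : SubdivisionIn G H) : Set V :=
  {w | ∃ (u v : W) (h : H.Adj u v), w ∈ (D.path h).support}

/-- `G` contains a subdivision of `H` as a subgraph. -/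
def ContainsSubdivision {V : Type u} {W : Type*} (G : SimpleGraph V) (H : SimpleGraph W) : Prop :=
  Nonempty (SubdivisionIn G H)

/-- A graph is outerplanar iff it contains no subdivision of `K₄` or `K_{2,3}`
as a subgraph. -/
def Outerplanar {V : Type u} (G : SimpleGraph V) : Prop :=
  ¬ ContainsSubdivision G (⊤ : SimpleGraph (Fin 4)) ∧
  ¬ ContainsSubdivision G (completeBipartiteGraph (Fin 2) (Fin 3))

/-!
Let `H = G[S ∪ {x, y}]` and suppose that `H` is outerplanar. A walk of `G` can leave `H` and
return only through `x` and `y`, which are adjacent, so it can be shortcut inside `H`; hence `H`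
is again 2-connected.

A 2-connected graph without a subdivision of `K_{2,3}` is Hamiltonian: a vertex off a longest
cycle yields an ear of that cycle, by maximality each of the two arcs between the ends of the ear
is at least as long as the ear, and the three paths form a subdivision of `K_{2,3}`. Without a
subdivision of `K₄`, the chords of a Hamiltonian cycle do not cross.

Deleting a suitable edge at `x` from a Hamiltonian cycle of `H` leaves a Hamiltonian path with
adjacent ends on which `x` and `y` are not consecutive. Among the edges of `H` joining two
non-consecutive vertices of the segment from `y` to `x`, let `ab` span a shortest segment. The
vertices strictly between `a` and `b` have degree 2 in `H`, and they are distinct from `x` and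
`y`, so they have degree 2 in `G` as well. Thus `ab` is compliant in `G`.
-/

section Subdivisions

variable {V : Type u} {W : Type*} {G : SimpleGraph V} {H : SimpleGraph W}

theorem containsSubdivision_of_orientation (r : W → W → Prop)
    (hr : ∀ ⦃u v⦄, H.Adj u v → r u v ∨ r v u) (f : W → V) (hf : Function.Injective f)
    (A : W → W → Set V)
    (hwalk : ∀ ⦃u v⦄, r u v → ∃ q : G.Walk (f u) (f v), ∀ w ∈ q.support, w ∈ A u v)
    (hbranch : ∀ ⦃u v⦄, r u v → ∀ z, f z ∈ A u v → z = u ∨ z = v)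
    (hdisj : ∀ ⦃u v u' v'⦄, r u v → r u' v' → (u, v) ≠ (u', v') →
      ∀ w ∈ A u v, w ∈ A u' v' → w = f u ∨ w = f v) :
    ContainsSubdivision G H := by
  classical
  have hpath : ∀ u v, H.Adj u v → ∃ q : G.Walk (f u) (f v), q.IsPath ∧
      ∃ a b, r a b ∧ s(a, b) = s(u, v) ∧ ∀ w ∈ q.support, w ∈ A a b := by
    intro u v huv
    rcases hr huv with h | h <;> obtain ⟨q, hq⟩ := hwalk h
    · exact ⟨q.bypass, q.bypass_isPath, u, v, h, rfl,
        fun w hw => hq w (q.support_bypass_subset_support hw)⟩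
    · refine ⟨q.reverse.bypass, q.reverse.bypass_isPath, v, u, h, Sym2.eq_swap, fun w hw => hq w ?_⟩
      simpa using q.reverse.support_bypass_subset_support hw
  choose q hq a b hab hs hA using hpath
  refine ⟨⟨f, hf, q, hq, ?_, ?_⟩⟩
  · rintro u v h w hw ⟨z, rfl⟩
    have := hbranch (hab u v h) z (hA u v h _ hw)
    have := hs u v h
    grind [Sym2.eq_iff]
  · intro u v u' v' h h' hne w hw hw'
    have hne' : (a u v h, b u v h) ≠ (a u' v' h', b u' v' h') := by
      have := hs u v h
      have := hs u' v' h'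
      grind
    have := hdisj (hab u v h) (hab u' v' h') hne' w (hA u v h w hw) (hA u' v' h' w hw')
    have := hs u v h
    grind [Sym2.eq_iff]

/-- Internal disjointness of two walks with the same ends, as required of the paths of a theta
graph. -/
def InternallyDisjoint {a b : V} (p q : G.Walk a b) : Prop :=
  ∀ ⦃v⦄, v ∈ p.support → v ∈ q.support → v = a ∨ v = b

theorem start_notMem_support_tail {a b : V} {p : G.Walk a b} (hp : p.IsPath) (hab : a ≠ b) :
    a ∉ p.tail.support := by
  have := hp.support_nodup
  rw [← p.cons_support_tail (Walk.not_nil_of_ne hab)] at this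
  exact (List.nodup_cons.1 this).1

theorem snd_ne_end {a b : V} {p : G.Walk a b} (hp : p.IsPath) (hlen : 2 ≤ p.length) :
    p.snd ≠ b := fun h => by
  have := (hp.getVert_eq_end_iff (by grind : 1 ≤ p.length)).1 h
  grind

theorem containsSubdivision_completeBipartiteGraph_of_internallyDisjoint {ι : Type*} {a b : V}
    (hab : a ≠ b) (P : ι → G.Walk a b) (hP : ∀ i, (P i).IsPath) (hlen : ∀ i, 2 ≤ (P i).length)
    (hdisj : ∀ ⦃i j⦄, i ≠ j → InternallyDisjoint (P i) (P j)) :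
    ContainsSubdivision G (completeBipartiteGraph (Fin 2) ι) := by
  have hnil : ∀ i, ¬ (P i).Nil := fun i => Walk.not_nil_of_ne hab
  have ha : ∀ i, a ∉ (P i).tail.support := fun i => start_notMem_support_tail (hP i) hab
  have htail : ∀ i w, w ∈ (P i).tail.support → w ∈ (P i).support := fun i w hw =>
    (P i).cons_support_tail (hnil i) ▸ List.mem_cons_of_mem a hw
  have htail_disj : ∀ i j w, w ∈ (P i).tail.support → w ∈ (P j).support → i = j ∨ w = b := by
    intro i j w hi hj
    have := @hdisj i j
    grind [InternallyDisjoint]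
  have hsnd_mem : ∀ i, (P i).snd ∈ (P i).tail.support := fun i => (P i).tail.start_mem_support
  have hsnd_ne : ∀ i, (P i).snd ≠ a ∧ (P i).snd ≠ b := fun i =>
    ⟨((P i).adj_snd (hnil i)).ne', snd_ne_end (hP i) (hlen i)⟩
  obtain ⟨f, hf0, hf1, hfi⟩ : ∃ f : Fin 2 ⊕ ι → V,
      f (.inl 0) = a ∧ f (.inl 1) = b ∧ ∀ i, f (.inr i) = (P i).snd :=
    ⟨Sum.elim ![a, b] fun i => (P i).snd, rfl, rfl, fun _ => rfl⟩
  have hcases : ∀ u : Fin 2 ⊕ ι, u = .inl 0 ∨ u = .inl 1 ∨ ∃ i, u = .inr i := by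
    simp [Fin.forall_fin_two]
  refine containsSubdivision_of_orientation
    (fun u v => ∃ i, v = .inr i ∧ (u = .inl 0 ∨ u = .inl 1)) ?_ f ?_
    (fun u v => {w | ∃ i, v = .inr i ∧
      (u = .inl 0 ∧ (w = a ∨ w = (P i).snd) ∨ u = .inl 1 ∧ w ∈ (P i).tail.support)}) ?_ ?_ ?_
  · intro u v h
    rcases hcases u with rfl | rfl | ⟨i, rfl⟩ <;> rcases hcases v with rfl | rfl | ⟨j, rfl⟩ <;>
      simp_all
  · intro u v h
    rcases hcases u with rfl | rfl | ⟨i, rfl⟩ <;> rcases hcases v with rfl | rfl | ⟨j, rfl⟩ <;>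
      grind
  · rintro u v ⟨i, rfl, rfl | rfl⟩
    · rw [hf0, hfi]
      exact ⟨((P i).adj_snd (hnil i)).toWalk, by simp⟩
    · rw [hf1, hfi]
      exact ⟨(P i).tail.reverse, fun w hw => ⟨i, rfl, .inr ⟨rfl, by
        rwa [Walk.support_reverse, List.mem_reverse] at hw⟩⟩⟩
  · rintro u v - z ⟨i, rfl, hz⟩
    rcases hcases z with rfl | rfl | ⟨j, rfl⟩ <;> grind
  · rintro u v u' v' ⟨i, rfl, rfl | rfl⟩ ⟨j, rfl, rfl | rfl⟩ <;> grind

end Subdivisions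

section CrossingChords

variable {V : Type u} {G : SimpleGraph V}

theorem exists_isPath_getVert {x z : V} {p : G.Walk x z} (hp : p.IsPath) {i j : ℕ} (hij : i ≤ j)
    (hj : j ≤ p.length) :
    ∃ q : G.Walk (p.getVert i) (p.getVert j), q.IsPath ∧ q.length = j - i ∧
      ∀ v ∈ q.support, v ∈ p.getVert '' Set.Icc i j := by
  have hend : (p.drop i).getVert (j - i) = p.getVert j := by
    rw [Walk.drop_getVert, Nat.add_sub_cancel' hij]
  refine ⟨((p.drop i).take (j - i)).copy rfl hend, ?_, ?_, ?_⟩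
  · simpa using (hp.drop i).take (j - i)
  · rw [Walk.length_copy, Walk.take_length, Walk.drop_length]
    omega
  · intro v hv
    rw [Walk.support_copy, Walk.mem_support_iff_exists_getVert] at hv
    obtain ⟨n, rfl, -⟩ := hv
    rw [Walk.take_getVert, Walk.drop_getVert]
    exact ⟨i + min (j - i) n, by simp only [Set.mem_Icc]; omega, rfl⟩

theorem exists_walk_getVert_of_adj_ends {x z : V} (p : G.Walk x z) (hxz : G.Adj x z) {i j : ℕ}
    (hj : j ≤ p.length) :
    ∃ q : G.Walk (p.getVert i) (p.getVert j),
      ∀ w ∈ q.support, w ∈ p.getVert '' (Set.Iic i ∪ Set.Icc j p.length) := by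
  refine ⟨(p.take i).reverse.append (.cons hxz (p.drop j).reverse), fun w hw => ?_⟩
  rw [Walk.mem_support_append_iff, Walk.support_cons, List.mem_cons, Walk.support_reverse,
    Walk.support_reverse, List.mem_reverse, List.mem_reverse] at hw
  rcases hw with hw | rfl | hw
  · obtain ⟨k, rfl, -⟩ := Walk.mem_support_iff_exists_getVert.1 hw
    exact ⟨min i k, .inl (min_le_left i k), (p.take_getVert i k).symm⟩
  · exact ⟨0, .inl (Nat.zero_le i), p.getVert_zero⟩
  · obtain ⟨k, rfl, hk⟩ := Walk.mem_support_iff_exists_getVert.1 hw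
    rw [Walk.drop_length] at hk
    exact ⟨j + k, .inr ⟨by omega, by omega⟩, (p.drop_getVert j k).symm⟩

theorem containsSubdivision_of_isPath_getVert {W : Type*} {H : SimpleGraph W} {x z : V}
    {p : G.Walk x z} (hp : p.IsPath) (r : W → W → Prop)
    (hr : ∀ ⦃u v⦄, H.Adj u v → r u v ∨ r v u) (f : W → ℕ) (hf : Function.Injective f)
    (hfp : ∀ u, f u ≤ p.length) (I : W → W → Set ℕ) (hI : ∀ u v, I u v ⊆ Set.Iic p.length)
    (hwalk : ∀ ⦃u v⦄, r u v → ∃ q : G.Walk (p.getVert (f u)) (p.getVert (f v)),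
      ∀ w ∈ q.support, w ∈ p.getVert '' I u v)
    (hbranch : ∀ ⦃u v⦄, r u v → ∀ z, f z ∈ I u v → z = u ∨ z = v)
    (hdisj : ∀ ⦃u v u' v'⦄, r u v → r u' v' → (u, v) ≠ (u', v') →
      ∀ k ∈ I u v, k ∈ I u' v' → k = f u ∨ k = f v) :
    ContainsSubdivision G H := by
  refine containsSubdivision_of_orientation r hr (p.getVert ∘ f)
    (fun u v h => hf (hp.getVert_injOn (hfp u) (hfp v) h))
    (fun u v => p.getVert '' I u v) hwalk ?_ ?_
  · rintro u v h z ⟨k, hk, hkz⟩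
    exact hbranch h z (hp.getVert_injOn (hI _ _ hk) (hfp z) hkz ▸ hk)
  · rintro u v u' v' h h' hne _ ⟨k, hk, rfl⟩ ⟨l, hl, hlk⟩
    obtain rfl : l = k := hp.getVert_injOn (hI _ _ hl) (hI _ _ hk) hlk
    exact (hdisj h h' hne l hk hl).imp (congrArg _) (congrArg _)

theorem containsSubdivision_K4_of_crossing_chords {x z : V} {p : G.Walk x z} (hp : p.IsPath)
    (hxz : G.Adj x z) {a b c d : ℕ} (hab : a < b) (hbc : b < c) (hcd : c < d) (hd : d ≤ p.length)
    (hac : G.Adj (p.getVert a) (p.getVert c)) (hbd : G.Adj (p.getVert b) (p.getVert d)) :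
    ContainsSubdivision G (⊤ : SimpleGraph (Fin 4)) := by
  have segment : ∀ {i j : ℕ}, i ≤ j → j ≤ p.length → ∃ q : G.Walk (p.getVert i) (p.getVert j),
      ∀ w ∈ q.support, w ∈ p.getVert '' Set.Icc i j := fun hij hj =>
    have ⟨q, _, _, hq⟩ := exists_isPath_getVert hp hij hj
    ⟨q, hq⟩
  have chord : ∀ {i j : ℕ}, G.Adj (p.getVert i) (p.getVert j) →
      ∃ q : G.Walk (p.getVert i) (p.getVert j), ∀ w ∈ q.support, w ∈ p.getVert '' {i, j} :=
    fun h => ⟨h.toWalk, by simp [Set.image_pair]⟩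
  -- The six edges of `K₄` are the three segments `ab`, `bc`, `cd`, the two chords, and the way
  -- from `a` back to `d` through the edge `xz`.
  refine containsSubdivision_of_isPath_getVert hp (· < ·) (fun u v h => lt_or_gt_of_ne h)
    ![a, b, c, d] ?_ ?_
    ![![∅, Set.Icc a b, {a, c}, Set.Iic a ∪ Set.Icc d p.length], ![∅, ∅, Set.Icc b c, {b, d}],
      ![∅, ∅, ∅, Set.Icc c d], ![∅, ∅, ∅, ∅]] ?_ ?_ ?_ ?_
  · intro u v h
    fin_cases u <;> fin_cases v <;> simp at h ⊢ <;> omega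
  · intro u
    fin_cases u <;> simp <;> omega
  · intro u v k hk
    fin_cases u <;> fin_cases v <;> simp at hk ⊢ <;> omega
  · intro u v h
    fin_cases u <;> fin_cases v <;> first
      | exact absurd h (by decide)
      | exact segment (by simp; omega) (by simp; omega)
      | exact chord ‹_›
      | exact exists_walk_getVert_of_adj_ends p hxz hd
  · intro u v h z hz
    fin_cases u <;> fin_cases v <;> fin_cases z <;> simp at h hz ⊢ <;> omega
  · intro u v u' v' h h' hne k hk hk'
    fin_cases u <;> fin_cases v <;> simp at h <;> fin_cases u' <;> fin_cases v' <;>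
      simp at h' hne hk hk' ⊢ <;> omega

end CrossingChords

section Ears

variable {V : Type u} {G : SimpleGraph V}

/-- Any two vertices other than `v` are joined by a walk avoiding `v`: the part of 2-connectedness
that says that deleting a vertex never disconnects the graph, phrased with walks of `G` itself. -/
def HasAvoidingWalks (G : SimpleGraph V) : Prop :=
  ∀ ⦃v a b : V⦄, a ≠ v → b ≠ v → ∃ w : G.Walk a b, v ∉ w.support

theorem toSubgraph_le_deleteVerts_iff {v a b : V} (w : G.Walk a b) :
    w.toSubgraph ≤ (⊤ : G.Subgraph).deleteVerts {v} ↔ v ∉ w.support := by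
  refine ⟨fun h hv => (h.1 (w.mem_verts_toSubgraph.2 hv)).2 rfl, fun hv => ⟨fun z hz => ?_, ?_⟩⟩
  · exact ⟨trivial, fun h => hv (h ▸ w.mem_verts_toSubgraph.1 hz)⟩
  · intro y z hyz
    have hne : ∀ {y z}, w.toSubgraph.Adj y z → y ≠ v := fun h hy =>
      hv (hy ▸ w.mem_support_of_adj_toSubgraph h)
    simpa using ⟨hne hyz, hne hyz.symm, hyz.adj_sub⟩

theorem twoConnected_iff : TwoConnected G ↔ 3 ≤ Nat.card V ∧ HasAvoidingWalks G := by
  refine and_congr_right fun hcard => forall_congr' fun v => ?_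
  have : Finite V := Nat.finite_of_card_ne_zero (by omega)
  have : Nontrivial V := Finite.one_lt_card_iff_nontrivial.1 (by omega)
  obtain ⟨a, ha⟩ := exists_ne v
  have hverts : ((⊤ : G.Subgraph).deleteVerts {v}).verts.Nonempty := ⟨a, by simpa⟩
  rw [← Subgraph.connected_iff', Subgraph.connected_iff_forall_exists_walk_subgraph,
    and_iff_right hverts]
  simp [toSubgraph_le_deleteVerts_iff]

theorem exists_ear (hG : HasAvoidingWalks G) {A : Set V} (hA : A.Nontrivial) {s : V} (hs : s ∉ A) :
    ∃ a ∈ A, ∃ b ∈ A, a ≠ b ∧ ∃ p : G.Walk a b, p.IsPath ∧ 2 ≤ p.length ∧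
      ∀ v ∈ p.support, v ∈ A → v = a ∨ v = b := by
  classical
  -- The vertices that `s` reaches outside `A`; all their neighbours outside this set lie in `A`.
  let D : Set V := {v | ∃ w : G.Walk s v, ∀ z ∈ w.support, z ∉ A}
  have hsD : s ∈ D := ⟨.nil, by simpa using hs⟩
  have hDA : ∀ v ∈ D, v ∉ A := fun v ⟨w, hw⟩ => hw v w.end_mem_support
  have hAdj : ∀ u ∈ D, ∀ v ∉ D, G.Adj u v → v ∈ A := by
    rintro u ⟨w, hw⟩ v hv huv
    by_contra hvA
    exact hv ⟨w.concat huv, by simp only [Walk.support_concat]; grind⟩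
  have hexit : ∀ t ∈ A, ∃ u ∈ D, ∃ a ∈ A, a ≠ t ∧ G.Adj u a := by
    intro t ht
    obtain ⟨a₀, ha₀, ha₀t⟩ := hA.exists_ne t
    obtain ⟨w, hw⟩ := hG (ne_of_mem_of_not_mem ht hs).symm ha₀t
    obtain ⟨e, he, heD, heD'⟩ := w.exists_boundary_dart D hsD fun h => hDA _ h ha₀
    exact ⟨e.fst, heD, e.snd, hAdj _ heD _ heD' e.adj,
      fun h => hw (h ▸ w.dart_snd_mem_support_of_mem_darts he), e.adj⟩
  obtain ⟨t, ht⟩ := hA.nonempty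
  obtain ⟨u, ⟨wu, hwu⟩, a, ha, -, hua⟩ := hexit t ht
  obtain ⟨u', ⟨wu', hwu'⟩, b, hb, hba, hub⟩ := hexit a ha
  have hq : ∀ z ∈ (wu.reverse.append wu').bypass.support, z ∉ A := fun z hz => by
    have := Walk.support_bypass_subset_support _ hz
    rw [Walk.mem_support_append_iff, Walk.support_reverse, List.mem_reverse] at this
    exact this.elim (hwu z) (hwu' z)
  refine ⟨a, ha, b, hb, hba.symm, .cons hua.symm ((wu.reverse.append wu').bypass.concat hub),
    ?_, by simp, fun v hv hvA => ?_⟩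
  · rw [Walk.cons_isPath_iff, Walk.concat_isPath_iff]
    grind [Walk.support_concat, Walk.bypass_isPath]
  · grind [Walk.support_cons, Walk.support_concat]

end Ears

section LongestCycle

variable {V : Type u} {G : SimpleGraph V}

theorem exists_internallyDisjoint_of_isCycle {u a b : V} {c : G.Walk u u} (hc : c.IsCycle)
    (ha : a ∈ c.support) (hb : b ∈ c.support) (hab : a ≠ b) :
    ∃ p q : G.Walk a b, p.IsPath ∧ q.IsPath ∧ InternallyDisjoint p q ∧
      p.length + q.length = c.length ∧ p.support ⊆ c.support ∧ q.support ⊆ c.support := by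
  classical
  obtain ⟨p, q, hpq⟩ := Walk.mem_support_iff_exists_append.1
    ((Walk.mem_support_rotate_iff c a ha).2 hb)
  have hc' := hc.rotate ha
  have hsupp : ∀ v ∈ (p.append q).support, v ∈ c.support := fun v hv =>
    (Walk.mem_support_rotate_iff c a ha).1 (hpq ▸ hv)
  have hlen : (p.append q).length = c.length := by rw [← hpq, Walk.length_rotate]
  rw [hpq] at hc'
  have hnodup := hc'.support_nodup
  rw [Walk.tail_support_append] at hnodup
  refine ⟨p, q.reverse, hc'.isPath_of_append_left (Walk.not_nil_of_ne hab.symm),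
    (hc'.isPath_of_append_right (Walk.not_nil_of_ne hab)).reverse, fun v hp hq => ?_, ?_, ?_, ?_⟩
  · rw [Walk.support_reverse, List.mem_reverse, Walk.mem_support_iff] at hq
    rw [Walk.mem_support_iff] at hp
    have := List.disjoint_of_nodup_append hnodup (a := v)
    tauto
  · rw [Walk.length_reverse, ← Walk.length_append, hlen]
  · exact fun v hv => hsupp v ((Walk.mem_support_append_iff ..).2 (.inl hv))
  · exact fun v hv => hsupp v ((Walk.mem_support_append_iff ..).2 (.inr (by simpa using hv)))

theorem isCycle_append_reverse {a b : V} {p q : G.Walk a b} (hp : p.IsPath) (hq : q.IsPath)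
    (hpq : InternallyDisjoint p q) (hlen : 2 ≤ p.length) : (p.append q.reverse).IsCycle := by
  refine hp.isCycle_append hq.reverse (fun v hvp hvq => ?_) (.inl hlen)
  have hpn := hp.support_nodup
  have hqn := hq.reverse.support_nodup
  rw [← Walk.cons_tail_support, List.nodup_cons] at hpn hqn
  rcases hpq (List.mem_of_mem_tail hvp)
    (by simpa using List.mem_of_mem_tail hvq) with rfl | rfl
  exacts [hpn.1 hvp, hqn.1 hvq]

theorem exists_isCycle (hG : HasAvoidingWalks G) {x y z : V} (hxy : x ≠ y) (hzx : z ≠ x)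
    (hzy : z ≠ y) : ∃ (u : V) (c : G.Walk u u), c.IsCycle := by
  obtain ⟨w, hw⟩ := hG hzx.symm hzy.symm
  have hadj := w.adj_snd (Walk.not_nil_of_ne hxy)
  have hz : z ∉ ({x, w.snd} : Set V) := by
    have := w.getVert_mem_support 1
    grind
  obtain ⟨a, ha, b, hb, hab, p, hp, hlen, -⟩ := exists_ear hG (Set.nontrivial_pair hadj.ne) hz
  have hab' : G.Adj a b := by grind [G.adj_comm]
  exact ⟨a, _, isCycle_append_reverse (q := hab'.toWalk) hp (by simp [hab]) (fun v _ hv => by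
    simpa using hv) hlen⟩

theorem exists_isCycle_forall_length_le [Finite V] {u : V} {c : G.Walk u u} (hc : c.IsCycle) :
    ∃ (v : V) (d : G.Walk v v), d.IsCycle ∧
      ∀ (w : V) (e : G.Walk w w), e.IsCycle → e.length ≤ d.length := by
  have := Fintype.ofFinite V
  let L : Set ℕ := {n | ∃ (v : V) (d : G.Walk v v), d.IsCycle ∧ d.length = n}
  have hL : BddAbove L := ⟨Fintype.card V, by
    rintro _ ⟨v, d, hd, rfl⟩
    rw [← d.length_tail_add_one hd.not_nil]
    exact hd.isPath_tail.length_lt⟩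
  obtain ⟨v, d, hd, hdL⟩ := Nat.sSup_mem (s := L) ⟨c.length, u, c, hc, rfl⟩ hL
  exact ⟨v, d, hd, fun w e he => hdL ▸ le_csSup hL ⟨w, e, he, rfl⟩⟩

theorem mem_support_of_forall_length_le (hG : HasAvoidingWalks G)
    (hK : ¬ ContainsSubdivision G (completeBipartiteGraph (Fin 2) (Fin 3))) {u : V}
    {c : G.Walk u u} (hc : c.IsCycle)
    (hmax : ∀ (w : V) (e : G.Walk w w), e.IsCycle → e.length ≤ c.length) (s : V) :
    s ∈ c.support := by
  by_contra hs
  have hA : {v | v ∈ c.support}.Nontrivial :=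
    ⟨u, c.start_mem_support, c.snd, c.getVert_mem_support 1, (c.adj_snd hc.not_nil).ne⟩
  obtain ⟨a, ha, b, hb, hab, p, hp, hlen, hpc⟩ := exists_ear hG hA hs
  obtain ⟨q₁, q₂, hq₁, hq₂, hq, hsum, hq₁c, hq₂c⟩ :=
    exists_internallyDisjoint_of_isCycle hc ha hb hab
  have hpq₁ : InternallyDisjoint p q₁ := fun v hv hv' => hpc v hv (hq₁c hv')
  have hpq₂ : InternallyDisjoint p q₂ := fun v hv hv' => hpc v hv (hq₂c hv')
  have hmax₁ := hmax a _ (isCycle_append_reverse hp hq₁ hpq₁ hlen)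
  have hmax₂ := hmax a _ (isCycle_append_reverse hp hq₂ hpq₂ hlen)
  rw [Walk.length_append, Walk.length_reverse] at hmax₁ hmax₂
  refine hK (containsSubdivision_completeBipartiteGraph_of_internallyDisjoint hab ![p, q₁, q₂]
    ?_ ?_ ?_)
  · simp [Fin.forall_fin_succ, hp, hq₁, hq₂]
  · simp [Fin.forall_fin_succ]
    omega
  · simp [Fin.forall_fin_succ]
    grind [InternallyDisjoint]

theorem TwoConnected.isHamiltonian [Fintype V] [DecidableEq V] (hG : TwoConnected G)
    (hK : ¬ ContainsSubdivision G (completeBipartiteGraph (Fin 2) (Fin 3))) :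
    G.IsHamiltonian := by
  intro _
  obtain ⟨hcard, hG⟩ := twoConnected_iff.1 hG
  rw [Nat.card_eq_fintype_card] at hcard
  obtain ⟨x, y, z, hxy, hxz, hyz⟩ := Fintype.two_lt_card_iff.1 hcard
  obtain ⟨_, c, hc⟩ := exists_isCycle hG hxy hxz.symm hyz.symm
  obtain ⟨u, d, hd, hmax⟩ := exists_isCycle_forall_length_le hc
  refine ⟨u, d, hd, hd.isPath_tail.isHamiltonian_of_mem fun v => ?_⟩
  rw [Walk.support_tail_of_not_nil _ hd.not_nil]
  rcases (Walk.mem_support_iff d).1 (mem_support_of_forall_length_le hG hK hd hmax v) with rfl | hv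
  exacts [d.end_mem_tail_support hd.not_nil, hv]

end LongestCycle

section FlatPath

variable {V : Type u} {G : SimpleGraph V}

theorem exists_minimal_chord {R : ℕ → ℕ → Prop} {s t : ℕ} (hst : s + 2 ≤ t) (h : R s t) :
    ∃ i j, s ≤ i ∧ i + 2 ≤ j ∧ j ≤ t ∧ R i j ∧
      ∀ k l, i ≤ k → k + 2 ≤ l → l ≤ j → R k l → k = i ∧ l = j := by
  induction hn : t - s using Nat.strong_induction_on generalizing s t with
  | _ n ih =>
    by_cases! hmin : ∀ k l, s ≤ k → k + 2 ≤ l → l ≤ t → R k l → k = s ∧ l = t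
    · exact ⟨s, t, le_rfl, hst, le_rfl, h, hmin⟩
    · obtain ⟨k, l, hsk, hkl, hlt, hR, hne⟩ := hmin
      obtain ⟨i, j, hki, hij, hjl, hRij, hmin⟩ := ih (l - k) (by grind) hkl hR rfl
      exact ⟨i, j, hsk.trans hki, hij, hjl.trans hlt, hRij, hmin⟩

theorem ncard_neighborSet_eq_two_of_minimal_chord [DecidableEq V] {x z : V} {p : G.Walk x z}
    (hp : p.IsHamiltonian) (hxz : G.Adj x z)
    (hK : ¬ ContainsSubdivision G (⊤ : SimpleGraph (Fin 4)))
    {i j m : ℕ} (him : i < m) (hmj : m < j) (hj : j ≤ p.length)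
    (hij : G.Adj (p.getVert i) (p.getVert j))
    (hmin : ∀ k l, i ≤ k → k + 2 ≤ l → l ≤ j → G.Adj (p.getVert k) (p.getVert l) →
      k = i ∧ l = j) :
    (G.neighborSet (p.getVert m)).ncard = 2 := by
  have hnbr : G.neighborSet (p.getVert m) = {p.getVert (m - 1), p.getVert (m + 1)} := by
    refine Set.Subset.antisymm (fun v hv => ?_) ?_
    · obtain ⟨k, rfl, hk⟩ := Walk.mem_support_iff_exists_getVert.1 (hp.mem_support v)
      rw [mem_neighborSet] at hv
      have hki : ¬ k < i := fun h =>
        hK (containsSubdivision_K4_of_crossing_chords hp.isPath hxz h him hmj hj hv.symm hij)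
      have hjk : ¬ j < k := fun h =>
        hK (containsSubdivision_K4_of_crossing_chords hp.isPath hxz him hmj h hk hij hv)
      have hkm : k ≠ m := by
        rintro rfl
        exact hv.ne rfl
      have hleft : ¬ k + 2 ≤ m := fun h => by
        have := hmin k m (by omega) h hmj.le hv.symm
        omega
      have hright : ¬ m + 2 ≤ k := fun h => by
        have := hmin m k him.le h (by omega) hv
        omega
      obtain rfl | rfl : k = m - 1 ∨ k = m + 1 := by omega
      exacts [.inl rfl, .inr rfl]
    · rintro v (rfl | rfl)
      · have := p.adj_getVert_succ (i := m - 1) (by omega)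
        rwa [Nat.sub_add_cancel (by omega), G.adj_comm] at this
      · exact p.adj_getVert_succ (by omega)
  have hne : p.getVert (m - 1) ≠ p.getVert (m + 1) := fun h => by
    have := hp.isPath.getVert_injOn (show m - 1 ≤ p.length by omega)
      (show m + 1 ≤ p.length by omega) h
    omega
  rw [hnbr, Set.ncard_pair hne]

theorem exists_isFlatPath_of_chord [DecidableEq V] {x z : V} {p : G.Walk x z}
    (hp : p.IsHamiltonian) (hxz : G.Adj x z)
    (hK : ¬ ContainsSubdivision G (⊤ : SimpleGraph (Fin 4)))
    {s t : ℕ} (hst : s + 2 ≤ t) (ht : t ≤ p.length) (hadj : G.Adj (p.getVert s) (p.getVert t)) :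
    ∃ a b, G.Adj a b ∧ ∃ q : G.Walk a b, IsFlatPath G q ∧
      ∀ v ∈ q.support, v ≠ a → v ≠ b → v ≠ p.getVert s ∧ v ≠ p.getVert t := by
  obtain ⟨i, j, hsi, hij, hjt, hadj', hmin⟩ :=
    exists_minimal_chord (R := fun k l => G.Adj (p.getVert k) (p.getVert l)) hst hadj
  obtain ⟨q, hq, hlen, hsupp⟩ := exists_isPath_getVert hp.isPath (by omega : i ≤ j) (hjt.trans ht)
  have hinternal : ∀ v ∈ q.support, v ≠ p.getVert i → v ≠ p.getVert j →
      ∃ m, i < m ∧ m < j ∧ p.getVert m = v := by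
    intro v hv hvi hvj
    obtain ⟨m, ⟨him, hmj⟩, rfl⟩ := hsupp v hv
    exact ⟨m, him.lt_of_ne (by grind), hmj.lt_of_ne (by grind), rfl⟩
  refine ⟨_, _, hadj', q, ⟨hq, by omega, fun v hv hvi hvj => ?_⟩, fun v hv hvi hvj => ?_⟩
  all_goals obtain ⟨m, him, hmj, rfl⟩ := hinternal v hv hvi hvj
  · exact ncard_neighborSet_eq_two_of_minimal_chord hp hxz hK him hmj (hjt.trans ht) hadj' hmin
  · have hinj := fun k (hk : k ≤ p.length) => hp.isPath.getVert_injOn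
      (show m ≤ p.length by omega) hk
    grind

theorem exists_isHamiltonianCycle_penultimate_ne [Fintype V] [DecidableEq V] [Nontrivial V]
    (hG : G.IsHamiltonian) (x y : V) :
    ∃ c : G.Walk x x, c.IsHamiltonianCycle ∧ c.penultimate ≠ y := by
  obtain ⟨c, hc⟩ := hG.exists_isHamiltonianCycle x
  by_cases hy : c.penultimate = y
  · refine ⟨c.reverse, ?_, ?_⟩
    · rw [Walk.isHamiltonianCycle_iff_isCycle_and_length_eq, Walk.isCycle_reverse,
        Walk.length_reverse]
      exact ⟨hc.isCycle, hc.length_eq⟩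
    · rw [Walk.penultimate_reverse, ← hy]
      exact hc.isCycle.snd_ne_penultimate
  · exact ⟨c, hc, hy⟩

theorem TwoConnected.exists_isFlatPath (hG : TwoConnected G) (hout : Outerplanar G) {x y : V}
    (hxy : G.Adj x y) :
    ∃ a b, G.Adj a b ∧ ∃ q : G.Walk a b, IsFlatPath G q ∧
      ∀ v ∈ q.support, v ≠ a → v ≠ b → v ≠ x ∧ v ≠ y := by
  classical
  have : Finite V := Nat.finite_of_card_ne_zero (by have := hG.1; omega)
  have := Fintype.ofFinite V
  have : Nontrivial V := ⟨x, y, hxy.ne⟩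
  obtain ⟨c, hc, hcy⟩ := exists_isHamiltonianCycle_penultimate_ne (hG.isHamiltonian hout.2) x y
  have hend : c.tail.getVert c.tail.length = x := c.tail.getVert_length
  obtain ⟨k, rfl, hk⟩ := Walk.mem_support_iff_exists_getVert.1
    (hc.isHamiltonian_tail.mem_support y)
  have hk2 : k + 2 ≤ c.tail.length := by
    have hlen := c.length_tail_add_one hc.not_nil
    have hk₁ : k ≠ c.tail.length := by
      rintro rfl
      exact hxy.ne hend.symm
    have hk₂ : k + 1 ≠ c.length - 1 := fun h => hcy (by rw [Walk.getVert_tail, h])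
    omega
  obtain ⟨a, b, hab, q, hq, hne⟩ := exists_isFlatPath_of_chord hc.isHamiltonian_tail
    (c.adj_snd hc.not_nil).symm hout.1 hk2 le_rfl (hend.symm ▸ hxy.symm)
  exact ⟨a, b, hab, q, hq, fun v hv hva hvb => (hne v hv hva hvb).symm.imp_left (hend ▸ ·)⟩

end FlatPath

section Induce

variable {V : Type u} {G : SimpleGraph V} {T : Set V} {x y : V}

theorem exists_walk_induce (hxy : G.Adj x y) (hx : x ∈ T)
    (hT : ∀ s ∈ T \ {x, y}, G.neighborSet s ⊆ T) {a : V} (w : G.Walk a x) (ha : a ∈ T) :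
    ∃ q : (G.induce T).Walk ⟨a, ha⟩ ⟨x, hx⟩, ∀ u ∈ q.support, u.1 ∈ w.support := by
  induction w with
  | nil => exact ⟨.nil, by simp⟩
  | @cons a c x hac w ih =>
    by_cases hc : c ∈ T
    · obtain ⟨q, hq⟩ := ih hxy hx hT hc
      refine ⟨.cons (show (G.induce T).Adj ⟨a, ha⟩ ⟨c, hc⟩ from hac) q, fun u hu => ?_⟩
      grind [Walk.support_cons]
    · have haxy : a = x ∨ a = y := by
        by_contra h
        exact hc (hT a ⟨ha, h⟩ hac)
      rcases haxy with rfl | rfl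
      · exact ⟨.nil, by simp⟩
      · exact ⟨(show (G.induce T).Adj ⟨a, ha⟩ ⟨x, hx⟩ from hxy.symm).toWalk, by simp⟩

theorem HasAvoidingWalks.induce (hG : HasAvoidingWalks G) (hxy : G.Adj x y) (hx : x ∈ T)
    (hy : y ∈ T) (hT : ∀ s ∈ T \ {x, y}, G.neighborSet s ⊆ T) :
    HasAvoidingWalks (G.induce T) := by
  intro v a b ha hb
  suffices h : ∃ u, ∀ a, a ≠ v → ∃ w : (G.induce T).Walk a u, v ∉ w.support by
    obtain ⟨u, hu⟩ := h
    obtain ⟨p, hp⟩ := hu a ha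
    obtain ⟨q, hq⟩ := hu b hb
    exact ⟨p.append q.reverse, by simp [hp, hq]⟩
  have hwalk : ∀ {x y : V}, G.Adj x y → ∀ hx : x ∈ T,
      (∀ s ∈ T \ {x, y}, G.neighborSet s ⊆ T) → x ≠ v →
      ∀ a, a ≠ v → ∃ w : (G.induce T).Walk a ⟨x, hx⟩, v ∉ w.support := by
    intro x y hxy hx hT hxv a hav
    obtain ⟨w, hw⟩ := hG (Subtype.coe_ne_coe.2 hav) hxv
    obtain ⟨q, hq⟩ := exists_walk_induce hxy hx hT w a.2
    exact ⟨q, fun h => hw (hq v h)⟩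
  by_cases hxv : x = v
  · exact ⟨_, hwalk hxy.symm hy (Set.pair_comm x y ▸ hT) fun h => hxy.ne (hxv.trans h.symm)⟩
  · exact ⟨_, hwalk hxy hx hT hxv⟩

theorem ncard_neighborSet_induce {s : T} (hs : G.neighborSet s ⊆ T) :
    ((G.induce T).neighborSet s).ncard = (G.neighborSet s).ncard := by
  rw [← Set.ncard_image_of_injective _ Subtype.val_injective]
  congr 1
  ext v
  simpa using fun h => hs h

theorem IsFlatPath.map_induce {a b : T} {q : (G.induce T).Walk a b}
    (hq : IsFlatPath (G.induce T) q)
    (hT : ∀ v ∈ q.support, v ≠ a → v ≠ b → G.neighborSet v ⊆ T) :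
    IsFlatPath G (q.map (Embedding.induce T).toHom) := by
  obtain ⟨hpath, hlen, hdeg⟩ := hq
  refine ⟨hpath.map Subtype.val_injective, by rwa [Walk.length_map], fun v hv hva hvb => ?_⟩
  rw [Walk.support_map, List.mem_map] at hv
  obtain ⟨v, hv, rfl⟩ := hv
  have hva : v ≠ a := fun h => hva (congrArg _ h)
  have hvb : v ≠ b := fun h => hvb (congrArg _ h)
  exact ncard_neighborSet_induce (hT v hv hva hvb) ▸ hdeg v hv hva hvb

theorem ssubset_image_supp_union {A : Set V} (c : (G.induce Aᶜ).ConnectedComponent) :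
    A ⊂ Subtype.val '' c.supp ∪ A := by
  obtain ⟨s, hs⟩ := c.nonempty_supp
  exact ⟨Set.subset_union_right, fun h => s.2 (h (.inl ⟨s, hs, rfl⟩))⟩

theorem neighborSet_subset_image_supp_union {A : Set V}
    (c : (G.induce Aᶜ).ConnectedComponent) :
    ∀ s ∈ (Subtype.val '' c.supp ∪ A) \ A, G.neighborSet s ⊆ Subtype.val '' c.supp ∪ A := by
  rintro _ ⟨⟨s, hs, rfl⟩ | hsA, hsA'⟩ v hv
  · by_cases hvA : v ∈ A
    · exact .inr hvA
    · have hadj : (G.induce Aᶜ).Adj s ⟨v, hvA⟩ := hv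
      exact .inl ⟨⟨v, hvA⟩, (c.mem_supp_congr_adj hadj).1 hs, rfl⟩
  · exact absurd hsA hsA'

end Induce

theorem stmt5_general {V : Type u} (G : SimpleGraph V) (hG : HasAvoidingWalks G)
    (hcomp : ∀ a b : V, ¬ Compliant G a b) {x y : V} (hxy : G.Adj x y) {T : Set V}
    (hfin : T.Finite) (hxyT : {x, y} ⊂ T) (hT : ∀ s ∈ T \ {x, y}, G.neighborSet s ⊆ T) :
    ¬ Outerplanar (G.induce T) := by
  intro hout
  obtain ⟨hx, hy⟩ := Set.pair_subset_iff.1 hxyT.subset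
  have hcard := Set.ncard_lt_ncard hxyT hfin
  rw [Set.ncard_pair hxy.ne] at hcard
  obtain ⟨a, b, hab, q, hq, hne⟩ :=
    (twoConnected_iff.2 ⟨hcard, hG.induce hxy hx hy hT⟩).exists_isFlatPath hout
      (x := ⟨x, hx⟩) (y := ⟨y, hy⟩) hxy
  refine hcomp a b ⟨hab, _, hq.map_induce fun v hv hva hvb => hT v ⟨v.2, ?_⟩⟩
  obtain ⟨hvx, hvy⟩ := hne v hv hva hvb
  simpa [Subtype.ext_iff] using And.intro hvx hvy

/-- Let `G` be a 2-connected graph with no compliant edges that is not a cycle,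
let `xy` be an edge, `S` the vertex set of a connected component of `G - {x,y}`,
and `H` the subgraph induced on `S ∪ {x,y}`. Then `H` is not outerplanar. -/
theorem stmt5 {V : Type u} [Finite V] (G : SimpleGraph V)
    (h2 : TwoConnected G) (hnc : ¬ IsCycleGraph G)
    (hcomp : ∀ x y : V, ¬ Compliant G x y)
    (x y : V) (hxy : G.Adj x y) (S : Set V)
    (hS : ∃ c : (G.induce ({x, y}ᶜ : Set V)).ConnectedComponent,
        S = Subtype.val '' c.supp) :
    ¬ Outerplanar (G.induce (S ∪ {x, y})) := by
  obtain ⟨c, rfl⟩ := hS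
  exact stmt5_general G (twoConnected_iff.1 h2).2 hcomp hxy (Set.toFinite _)
    (ssubset_image_supp_union c) (neighborSet_subset_image_supp_union c)
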